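/- Let T and S be bounded linear operators on H each admitting an A-adjoint. Then ω_A(T+S) ≤ (1/2) · [ ω_A(T) + ω_A(S) + sqrt( (ω_A(T) − ω_A(S))² + 4 · sup_{θ∈ℝ} ‖Re_A(e^{iθ}T) · Re_A(e^{iθ}S)‖_A ) ], and moreover this upper bound is at most ω_A(T) + ω_A(S). -/

import Mathlib

noncomputable section

open ContinuousLinearMap

variable {H : Type*} [NormedAddCommGroup H] [InnerProductSpace ℂ H] [CompleteSpace H]

/-- The semi-inner product induced by the positive operator `A`: `⟨x, y⟩_A := ⟨A x, y⟩`. -/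
def innA (A : H →L[ℂ] H) (x y : H) : ℂ := inner ℂ (A x) y

/-- The seminorm induced by `A`: `‖x‖_A := ⟨x, x⟩_A ^ (1/2)`. -/
def vnormA (A : H →L[ℂ] H) (x : H) : ℝ := Real.sqrt (innA A x x).re

/-- The `A`-operator seminorm: `‖T‖_A := sup {‖T x‖_A : ‖x‖_A = 1}`. -/
def opNormA (A T : H →L[ℂ] H) : ℝ :=
  sSup {c : ℝ | ∃ x : H, vnormA A x = 1 ∧ c = vnormA A (T x)}

/-- The `A`-numerical radius: `ω_A(T) := sup {|⟨T x, x⟩_A| : ‖x‖_A = 1}`. -/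
def wA (A T : H →L[ℂ] H) : ℝ :=
  sSup {c : ℝ | ∃ x : H, vnormA A x = 1 ∧ c = ‖innA A (T x) x‖}

/-- `T` admits an `A`-adjoint: there is a bounded operator `X` with `A X = T* A`. -/
def HasAAdjoint (A T : H →L[ℂ] H) : Prop :=
  ∃ X : H →L[ℂ] H, A ∘L X = adjoint T ∘L A

/-- `X` is the reduced `A`-adjoint `T^{♯_A}` of `T`: it solves `A X = T* A` and its range
is contained in the closure of the range of `A`. -/
def IsReducedAAdjoint (A T X : H →L[ℂ] H) : Prop :=
  (A ∘L X = adjoint T ∘L A) ∧ ∀ y : H, X y ∈ closure (Set.range A)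

/-- `Re_A(e^{iθ} T) := (e^{iθ} T + e^{-iθ} T^{♯_A}) / 2`. -/
def ReA (θ : ℝ) (T Tsharp : H →L[ℂ] H) : H →L[ℂ] H :=
  (2 : ℂ)⁻¹ • (Complex.exp ((θ : ℂ) * Complex.I) • T +
    Complex.exp (-(θ : ℂ) * Complex.I) • Tsharp)

set_option linter.unusedSectionVars false

/-- The square root of a positive operator turns `⟨·, ·⟩_A` into the inner product of images. -/
theorem exists_innA_eq_inner (A : H →L[ℂ] H) (hA : A.IsPositive) :
    ∃ B : H →L[ℂ] H, ∀ x y : H, innA A x y = inner ℂ (B x) (B y) := by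
  have hA' : (0 : H →L[ℂ] H) ≤ A := (nonneg_iff_isPositive A).2 hA
  refine ⟨CFC.sqrt A, fun x y => ?_⟩
  have hsa : IsSelfAdjoint (CFC.sqrt A) := (CFC.sqrt_nonneg A).isSelfAdjoint
  have hmul : CFC.sqrt A * CFC.sqrt A = A := CFC.sqrt_mul_sqrt_self A hA'
  have h : A x = CFC.sqrt A (CFC.sqrt A x) := by
    conv_lhs => rw [← hmul]
    rfl
  have hadj : adjoint (CFC.sqrt A) = CFC.sqrt A := hsa
  rw [innA, h, ← adjoint_inner_right, hadj]

theorem vnormA_eq_norm {A B : H →L[ℂ] H} (hB : ∀ x y : H, innA A x y = inner ℂ (B x) (B y))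
    (x : H) : vnormA A x = ‖B x‖ := by
  have h : (inner ℂ (B x) (B x) : ℂ).re = ‖B x‖ ^ 2 := by
    simpa using (inner_self_eq_norm_sq (𝕜 := ℂ) (B x))
  rw [vnormA, hB, h, Real.sqrt_sq (norm_nonneg _)]

theorem inner_sharp_left {A B T X : H →L[ℂ] H}
    (hB : ∀ x y : H, innA A x y = inner ℂ (B x) (B y))
    (h : A ∘L X = adjoint T ∘L A) (x y : H) :
    inner ℂ (B (X x)) (B y) = inner ℂ (B x) (B (T y)) := by
  rw [← hB, ← hB, innA, innA]
  have hx : A (X x) = adjoint T (A x) := congrArg (fun F : H →L[ℂ] H => F x) h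
  rw [hx, adjoint_inner_left]

/-- A bounded operator which is symmetric for `⟨B ·, B ·⟩` is bounded by its operator norm for the
seminorm `‖B ·‖`. -/
theorem norm_apply_le_opNorm_of_symm {B R : H →L[ℂ] H}
    (hR : ∀ x y : H, inner ℂ (B (R x)) (B y) = inner ℂ (B x) (B (R y))) (x : H) :
    ‖B (R x)‖ ≤ ‖R‖ * ‖B x‖ := by
  -- the orbit norms `‖B (R ^ n x)‖` are log-convex
  have hconv : ∀ n : ℕ, ‖B ((R ^ (n + 1)) x)‖ ^ 2
      ≤ ‖B ((R ^ n) x)‖ * ‖B ((R ^ (n + 2)) x)‖ := by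
    intro n
    have h1 : (R ^ (n + 1)) x = R ((R ^ n) x) := by rw [pow_succ']; rfl
    have h2 : (R ^ (n + 2)) x = R (R ((R ^ n) x)) := by
      rw [pow_succ', pow_succ']; rfl
    rw [h1, h2]
    calc ‖B (R ((R ^ n) x))‖ ^ 2
        = ‖(inner ℂ (B (R ((R ^ n) x))) (B (R ((R ^ n) x))) : ℂ)‖ := by
          rw [inner_self_eq_norm_sq_to_K]; simp
      _ = ‖(inner ℂ (B ((R ^ n) x)) (B (R (R ((R ^ n) x)))) : ℂ)‖ := by rw [hR]
      _ ≤ _ := norm_inner_le_norm _ _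
  by_contra! hlt
  have hx0 : 0 < ‖B x‖ := by
    rcases (norm_nonneg (B x)).eq_or_lt with h | h
    · have h0 := hconv 0
      rw [pow_zero, one_apply_eq_self, ← h, zero_mul, zero_add, pow_one] at h0
      rw [← h, mul_zero] at hlt
      exact absurd h0 (pow_pos hlt 2).not_ge
    · exact h
  set q : ℝ := ‖B (R x)‖ / ‖B x‖ with hq
  have hqR : ‖R‖ < q := by rw [hq, lt_div_iff₀ hx0]; exact hlt
  have hq0 : 0 < q := (norm_nonneg R).trans_lt hqR
  have hstep : ∀ n : ℕ, 0 < ‖B ((R ^ n) x)‖ ∧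
      q * ‖B ((R ^ n) x)‖ ≤ ‖B ((R ^ (n + 1)) x)‖ := by
    intro n
    induction n with
    | zero =>
      refine ⟨by simpa using hx0, ?_⟩
      simp [hq, div_mul_cancel₀ _ hx0.ne']
    | succ n ih =>
      obtain ⟨hpos, hle⟩ := ih
      have hpos' : 0 < ‖B ((R ^ (n + 1)) x)‖ := (mul_pos hq0 hpos).trans_le hle
      refine ⟨hpos', ?_⟩
      have h := hconv n
      refine le_of_mul_le_mul_left ?_ hpos
      nlinarith
  have hgrow : ∀ n : ℕ, q ^ n * ‖B x‖ ≤ ‖B‖ * (‖R‖ ^ n * ‖x‖) := by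
    intro n
    have h1 : ∀ n : ℕ, q ^ n * ‖B x‖ ≤ ‖B ((R ^ n) x)‖ := by
      intro n
      induction n with
      | zero => simp
      | succ n ih =>
        calc q ^ (n + 1) * ‖B x‖ = q * (q ^ n * ‖B x‖) := by ring
          _ ≤ q * ‖B ((R ^ n) x)‖ := by gcongr
          _ ≤ _ := (hstep n).2
    have h2 : ∀ n : ℕ, ‖(R ^ n) x‖ ≤ ‖R‖ ^ n * ‖x‖ := by
      intro n
      induction n with
      | zero => simp
      | succ n ih =>
        have h : (R ^ (n + 1)) x = R ((R ^ n) x) := by rw [pow_succ']; rfl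
        rw [h, pow_succ', mul_assoc]
        exact (R.le_opNorm _).trans (by gcongr)
    exact (h1 n).trans ((B.le_opNorm _).trans (by gcongr; exact h2 n))
  have hlim : Filter.Tendsto (fun n : ℕ => ‖B‖ * ‖x‖ * (‖R‖ / q) ^ n) Filter.atTop (nhds 0) := by
    simpa using (tendsto_pow_atTop_nhds_zero_of_lt_one (by positivity)
      ((div_lt_one hq0).2 hqR)).const_mul (‖B‖ * ‖x‖)
  have hle : ‖B x‖ ≤ 0 := by
    refine ge_of_tendsto' hlim fun n => ?_
    rw [div_pow, ← mul_div_assoc, le_div_iff₀ (pow_pos hq0 n)]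
    linarith [hgrow n]
  exact absurd hle hx0.not_ge

theorem exists_norm_apply_le {B T X : H →L[ℂ] H}
    (hX : ∀ x y : H, inner ℂ (B (X x)) (B y) = inner ℂ (B x) (B (T y))) :
    ∃ C : ℝ, 0 ≤ C ∧ ∀ x : H, ‖B (T x)‖ ≤ C * ‖B x‖ := by
  have hX' : ∀ x y : H, inner ℂ (B (T x)) (B y) = inner ℂ (B x) (B (X y)) := fun x y => by
    rw [← inner_conj_symm, ← hX, inner_conj_symm]
  refine ⟨Real.sqrt ‖X * T‖, Real.sqrt_nonneg _, fun x => ?_⟩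
  have hsymm := norm_apply_le_opNorm_of_symm (B := B) (R := X * T)
    (fun x y => by simp only [mul_apply_eq_comp, hX, hX']) x
  have h : ‖B (T x)‖ ^ 2 ≤ ‖X * T‖ * ‖B x‖ ^ 2 := by
    calc ‖B (T x)‖ ^ 2 = ‖(inner ℂ (B (T x)) (B (T x)) : ℂ)‖ := by
          rw [inner_self_eq_norm_sq_to_K]; simp
      _ = ‖(inner ℂ (B ((X * T) x)) (B x) : ℂ)‖ := by rw [← hX]; rfl
      _ ≤ ‖B ((X * T) x)‖ * ‖B x‖ := norm_inner_le_norm _ _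
      _ ≤ ‖X * T‖ * ‖B x‖ * ‖B x‖ := by gcongr
      _ = _ := by ring
  calc ‖B (T x)‖ ≤ Real.sqrt (‖X * T‖ * ‖B x‖ ^ 2) := Real.le_sqrt_of_sq_le h
    _ = _ := by rw [Real.sqrt_mul (norm_nonneg _), Real.sqrt_sq (norm_nonneg _)]

/-- A symmetric operator is bounded by its numerical radius. -/
theorem norm_apply_le_of_symm_of_numerical {B R : H →L[ℂ] H} {w : ℝ} (hw : 0 ≤ w)
    (hR : ∀ x y : H, inner ℂ (B (R x)) (B y) = inner ℂ (B x) (B (R y)))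
    (hnum : ∀ x : H, |(inner ℂ (B (R x)) (B x) : ℂ).re| ≤ w * ‖B x‖ ^ 2) (x : H) :
    ‖B (R x)‖ ≤ w * ‖B x‖ := by
  have hre : ∀ x y : H, (inner ℂ (B (R y)) (B x) : ℂ).re = (inner ℂ (B (R x)) (B y) : ℂ).re :=
    fun x y => by rw [hR, ← inner_conj_symm, Complex.conj_re]
  have hpol : ∀ y : H, 2 * (inner ℂ (B (R x)) (B y) : ℂ).re ≤ w * (‖B x‖ ^ 2 + ‖B y‖ ^ 2) := by
    intro y
    have h1 := (le_abs_self _).trans (hnum (x + y))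
    have h2 := (neg_le_abs _).trans (hnum (x - y))
    have hpar := parallelogram_law_with_norm ℂ (B x) (B y)
    simp only [map_add, map_sub, inner_add_left, inner_add_right, inner_sub_left,
      inner_sub_right, Complex.add_re, Complex.sub_re, hre x y] at h1 h2
    nlinarith
  have hself : (inner ℂ (B (R x)) (B (R x)) : ℂ).re = ‖B (R x)‖ ^ 2 := by
    simpa using (inner_self_eq_norm_sq (𝕜 := ℂ) (B (R x)))
  have hsq : ∀ t : ℝ, 2 * (t * ‖B (R x)‖ ^ 2) ≤ w * (‖B x‖ ^ 2 + t ^ 2 * ‖B (R x)‖ ^ 2) := by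
    intro t
    have h := hpol ((t : ℂ) • R x)
    rwa [map_smul, inner_smul_right, Complex.re_ofReal_mul, hself, norm_smul, mul_pow,
      Complex.norm_real, Real.norm_eq_abs, sq_abs] at h
  rcases hw.eq_or_lt with h0 | h0
  · subst h0
    have := hsq 1
    nlinarith [norm_nonneg (B (R x))]
  · have h := hsq w⁻¹
    have h' : ‖B (R x)‖ ^ 2 ≤ (w * ‖B x‖) ^ 2 := by
      have e : w * (‖B x‖ ^ 2 + w⁻¹ ^ 2 * ‖B (R x)‖ ^ 2)
          = w * ‖B x‖ ^ 2 + w⁻¹ * ‖B (R x)‖ ^ 2 := by field_simp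
      rw [e] at h
      have h3 : w⁻¹ * ‖B (R x)‖ ^ 2 ≤ w * ‖B x‖ ^ 2 := by linarith
      rw [inv_mul_le_iff₀ h0] at h3
      linarith
    exact le_of_sq_le_sq h' (by positivity)

theorem wA_nonneg (A T : H →L[ℂ] H) : 0 ≤ wA A T :=
  Real.sSup_nonneg (by rintro _ ⟨x, -, rfl⟩; exact norm_nonneg _)

theorem opNormA_nonneg (A T : H →L[ℂ] H) : 0 ≤ opNormA A T :=
  Real.sSup_nonneg (by rintro _ ⟨x, -, rfl⟩; exact Real.sqrt_nonneg _)

theorem norm_apply_inv_smul_self {B : H →L[ℂ] H} {x : H} (hx : ‖B x‖ ≠ 0) :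
    ‖B (((‖B x‖ : ℝ) : ℂ)⁻¹ • x)‖ = 1 := by
  rw [map_smul, norm_smul, norm_inv, Complex.norm_real, norm_norm, inv_mul_cancel₀ hx]

theorem norm_inner_le_wA {A B T : H →L[ℂ] H}
    (hB : ∀ x y : H, innA A x y = inner ℂ (B x) (B y)) {C : ℝ}
    (hC : ∀ x : H, ‖B (T x)‖ ≤ C * ‖B x‖) (x : H) :
    ‖(inner ℂ (B (T x)) (B x) : ℂ)‖ ≤ wA A T * ‖B x‖ ^ 2 := by
  rcases eq_or_ne ‖B x‖ 0 with h0 | h0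
  · rw [norm_eq_zero.1 h0]; simp
  have hbdd : BddAbove {c : ℝ | ∃ x : H, vnormA A x = 1 ∧ c = ‖innA A (T x) x‖} := by
    refine ⟨C, ?_⟩
    rintro _ ⟨y, hy, rfl⟩
    rw [vnormA_eq_norm hB] at hy
    rw [hB]
    have h := hC y
    refine (norm_inner_le_norm _ _).trans ?_
    rw [hy] at h ⊢
    linarith
  have h := le_csSup hbdd ⟨_, (vnormA_eq_norm hB _).trans (norm_apply_inv_smul_self h0), rfl⟩
  change _ ≤ wA A T at h
  rw [hB, map_smul, map_smul, map_smul, inner_smul_left, inner_smul_right, norm_mul, norm_mul,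
    RCLike.norm_conj, norm_inv, Complex.norm_real, norm_norm] at h
  have hpos : 0 < ‖B x‖ := (norm_nonneg _).lt_of_ne' h0
  rw [← mul_assoc, ← mul_inv, ← sq, inv_mul_le_iff₀ (by positivity)] at h
  linarith

theorem norm_apply_le_opNormA {A B T : H →L[ℂ] H}
    (hB : ∀ x y : H, innA A x y = inner ℂ (B x) (B y)) {C : ℝ}
    (hC : ∀ x : H, ‖B (T x)‖ ≤ C * ‖B x‖) {x : H} (hx : ‖B x‖ = 1) :
    ‖B (T x)‖ ≤ opNormA A T := by
  refine le_csSup ⟨C, ?_⟩ ⟨x, by rw [vnormA_eq_norm hB, hx], (vnormA_eq_norm hB _).symm⟩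
  rintro _ ⟨y, hy, rfl⟩
  rw [vnormA_eq_norm hB] at hy ⊢
  simpa [hy] using hC y

theorem opNormA_le {A B T : H →L[ℂ] H}
    (hB : ∀ x y : H, innA A x y = inner ℂ (B x) (B y)) {C : ℝ} (hC0 : 0 ≤ C)
    (hC : ∀ x : H, ‖B (T x)‖ ≤ C * ‖B x‖) : opNormA A T ≤ C := by
  refine Real.sSup_le ?_ hC0
  rintro _ ⟨y, hy, rfl⟩
  rw [vnormA_eq_norm hB] at hy ⊢
  simpa [hy] using hC y

theorem conj_exp_mul_I (θ : ℝ) :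
    (starRingEnd ℂ) (Complex.exp ((θ : ℂ) * Complex.I)) = Complex.exp (-(θ : ℂ) * Complex.I) := by
  rw [← Complex.exp_conj]; simp

theorem ReA_add (θ : ℝ) (T S Tsharp Ssharp : H →L[ℂ] H) :
    ReA θ (T + S) (Tsharp + Ssharp) = ReA θ T Tsharp + ReA θ S Ssharp := by
  simp only [ReA, smul_add]; abel

theorem inner_ReA_symm {B T X : H →L[ℂ] H}
    (hX : ∀ x y : H, inner ℂ (B (X x)) (B y) = inner ℂ (B x) (B (T y))) (θ : ℝ) (x y : H) :
    inner ℂ (B (ReA θ T X x)) (B y) = inner ℂ (B x) (B (ReA θ T X y)) := by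
  have hX' : ∀ x y : H, inner ℂ (B (T x)) (B y) = inner ℂ (B x) (B (X y)) := fun x y => by
    rw [← inner_conj_symm, ← hX, inner_conj_symm]
  have h2 : (starRingEnd ℂ) (Complex.exp (-(θ : ℂ) * Complex.I))
      = Complex.exp ((θ : ℂ) * Complex.I) := by rw [← conj_exp_mul_I, Complex.conj_conj]
  simp only [ReA, smul_apply, add_apply, map_smul, map_add, inner_smul_left, inner_smul_right,
    inner_add_left, inner_add_right, conj_exp_mul_I, h2, hX, hX', map_inv₀, Complex.conj_ofNat]
  ring

theorem re_inner_ReA {B T X : H →L[ℂ] H}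
    (hX : ∀ x y : H, inner ℂ (B (X x)) (B y) = inner ℂ (B x) (B (T y))) (θ : ℝ) (x : H) :
    (inner ℂ (B (ReA θ T X x)) (B x) : ℂ).re
      = (Complex.exp (-(θ : ℂ) * Complex.I) * inner ℂ (B (T x)) (B x)).re := by
  have h2 : (starRingEnd ℂ) (Complex.exp (-(θ : ℂ) * Complex.I))
      = Complex.exp ((θ : ℂ) * Complex.I) := by rw [← conj_exp_mul_I, Complex.conj_conj]
  set z : ℂ := Complex.exp (-(θ : ℂ) * Complex.I) * inner ℂ (B (T x)) (B x) with hz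
  have h : (inner ℂ (B (ReA θ T X x)) (B x) : ℂ) = 2⁻¹ * (z + (starRingEnd ℂ) z) := by
    rw [hz, map_mul, inner_conj_symm, h2]
    simp only [ReA, smul_apply, add_apply, map_smul, map_add, inner_smul_left,
      inner_add_left, conj_exp_mul_I, h2, hX, map_inv₀, Complex.conj_ofNat]
  rw [h, Complex.add_conj]
  simp

theorem norm_ReA_apply_le {B T X : H →L[ℂ] H} {w : ℝ} (hw : 0 ≤ w)
    (hX : ∀ x y : H, inner ℂ (B (X x)) (B y) = inner ℂ (B x) (B (T y)))
    (hnum : ∀ x : H, ‖(inner ℂ (B (T x)) (B x) : ℂ)‖ ≤ w * ‖B x‖ ^ 2) (θ : ℝ) (x : H) :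
    ‖B (ReA θ T X x)‖ ≤ w * ‖B x‖ := by
  refine norm_apply_le_of_symm_of_numerical hw (inner_ReA_symm hX θ) (fun y => ?_) x
  rw [re_inner_ReA hX]
  refine (Complex.abs_re_le_norm _).trans ?_
  rw [norm_mul, ← Complex.ofReal_neg, Complex.norm_exp_ofReal_mul_I, one_mul]
  exact hnum y

/-- An approximate eigenvector of `P + Q` for `w` bounds `(w - a) * (w - b)`. -/
theorem sub_mul_sub_le_of_approx_eigenvector {B P Q : H →L[ℂ] H} {a b c w δ : ℝ} (ha : 0 ≤ a)
    (hP : ∀ x : H, ‖B (P x)‖ ≤ a * ‖B x‖) (hQ : ∀ x : H, ‖B (Q x)‖ ≤ b * ‖B x‖)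
    {x : H} (hx : ‖B x‖ = 1) (hPQ : ‖B (P (Q x))‖ ≤ c) (haw : a < w)
    (hδ : ‖B (P x + Q x - (w : ℂ) • x)‖ ≤ δ) : (w - a) * (w - b) ≤ c + w * δ := by
  set e := P x + Q x - (w : ℂ) • x with he
  have hw0 : 0 ≤ w := ha.trans haw.le
  have h1 : w ≤ ‖B (P x)‖ + b + δ := by
    have h : (w : ℂ) • B x = B (P x) + B (Q x) - B e := by
      rw [he, map_sub, map_add, map_smul]; abel
    have h' : w = ‖B (P x) + B (Q x) - B e‖ := by
      rw [← h, norm_smul, hx, Complex.norm_real, Real.norm_of_nonneg hw0, mul_one]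
    have hq := hQ x
    rw [hx] at hq
    linarith [norm_sub_le (B (P x) + B (Q x)) (B e), norm_add_le (B (P x)) (B (Q x))]
  have h2 : w * ‖B (P x)‖ ≤ a * ‖B (P x)‖ + c + a * δ := by
    have h : (w : ℂ) • B (P x) = B (P (P x)) + B (P (Q x)) - B (P e) := by
      rw [he]; simp only [map_sub, map_add, map_smul]; abel
    have h' : w * ‖B (P x)‖ = ‖B (P (P x)) + B (P (Q x)) - B (P e)‖ := by
      rw [← h, norm_smul, Complex.norm_real, Real.norm_of_nonneg hw0]
    have he' : a * ‖B e‖ ≤ a * δ := by gcongr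
    linarith [norm_sub_le (B (P (P x)) + B (P (Q x))) (B (P e)),
      norm_add_le (B (P (P x))) (B (P (Q x))), hP (P x), hP e]
  nlinarith

/-- If `(w - a) * (w - b) ≤ c` then `w` is at most the larger root. -/
theorem le_half_add_sqrt {a b c w : ℝ} (h : (w - a) * (w - b) ≤ c) :
    w ≤ 1 / 2 * (a + b + Real.sqrt ((a - b) ^ 2 + 4 * c)) := by
  have : 2 * w - a - b ≤ Real.sqrt ((a - b) ^ 2 + 4 * c) :=
    Real.le_sqrt_of_sq_le (by nlinarith)
  linarith

/-- A vector nearly attaining `Re ⟨R x, x⟩ = w` is an approximate eigenvector. -/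
theorem norm_sub_smul_sq_le {B R : H →L[ℂ] H} {w ε : ℝ} (hw : 0 ≤ w) {x : H} (hx : ‖B x‖ = 1)
    (hR : ‖B (R x)‖ ≤ w) (h : w - ε ≤ (inner ℂ (B (R x)) (B x) : ℂ).re) :
    ‖B (R x - (w : ℂ) • x)‖ ^ 2 ≤ 2 * w * ε := by
  have h1 := norm_sub_sq (𝕜 := ℂ) (B (R x)) ((w : ℂ) • B x)
  rw [inner_smul_right, norm_smul, hx, Complex.norm_real, Real.norm_of_nonneg hw] at h1
  rw [map_sub, map_smul, h1]
  have h2 : RCLike.re ((w : ℂ) * inner ℂ (B (R x)) (B x))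
      = w * (inner ℂ (B (R x)) (B x) : ℂ).re := Complex.re_ofReal_mul _ _
  rw [h2]
  nlinarith [norm_nonneg (B (R x))]

theorem stmt8 (A : H →L[ℂ] H) (hA : A.IsPositive) (hA0 : A ≠ 0)
    (T S Tsharp Ssharp : H →L[ℂ] H)
    (hT : IsReducedAAdjoint A T Tsharp) (hS : IsReducedAAdjoint A S Ssharp) :
    wA A (T + S) ≤
      (1 / 2) * (wA A T + wA A S +
        Real.sqrt ((wA A T - wA A S) ^ 2 +
          4 * sSup {c : ℝ | ∃ θ : ℝ,
            c = opNormA A (ReA θ T Tsharp * ReA θ S Ssharp)})) ∧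
    (1 / 2) * (wA A T + wA A S +
        Real.sqrt ((wA A T - wA A S) ^ 2 +
          4 * sSup {c : ℝ | ∃ θ : ℝ,
            c = opNormA A (ReA θ T Tsharp * ReA θ S Ssharp)})) ≤
      wA A T + wA A S := by
  obtain ⟨B, hB⟩ := exists_innA_eq_inner A hA
  have hTX := inner_sharp_left hB hT.1
  have hSX := inner_sharp_left hB hS.1
  have hTSX : ∀ x y : H, inner ℂ (B ((Tsharp + Ssharp) x)) (B y)
      = inner ℂ (B x) (B ((T + S) y)) := fun x y => by
    simp only [add_apply, map_add, inner_add_left, inner_add_right, hTX, hSX]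
  obtain ⟨CT, -, hCT⟩ := exists_norm_apply_le hTX
  obtain ⟨CS, -, hCS⟩ := exists_norm_apply_le hSX
  obtain ⟨CTS, -, hCTS⟩ := exists_norm_apply_le hTSX
  have hP := norm_ReA_apply_le (wA_nonneg A T) hTX (norm_inner_le_wA hB hCT)
  have hQ := norm_ReA_apply_le (wA_nonneg A S) hSX (norm_inner_le_wA hB hCS)
  have hR := norm_ReA_apply_le (wA_nonneg A (T + S)) hTSX (norm_inner_le_wA hB hCTS)
  have ha := wA_nonneg A T
  have hb := wA_nonneg A S
  have hw := wA_nonneg A (T + S)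
  set a := wA A T
  set b := wA A S
  have hPQ : ∀ (θ : ℝ) (x : H),
      ‖B ((ReA θ T Tsharp * ReA θ S Ssharp) x)‖ ≤ a * b * ‖B x‖ := fun θ x => by
    calc _ ≤ a * ‖B (ReA θ S Ssharp x)‖ := hP θ _
      _ ≤ a * (b * ‖B x‖) := by gcongr; exact hQ θ x
      _ = _ := by ring
  have hab : 0 ≤ a * b := mul_nonneg ha hb
  set s := {c : ℝ | ∃ θ : ℝ, c = opNormA A (ReA θ T Tsharp * ReA θ S Ssharp)}
  have hs : ∀ c ∈ s, c ≤ a * b := by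
    rintro _ ⟨θ, rfl⟩
    exact opNormA_le hB hab (hPQ θ)
  have hc0 : 0 ≤ sSup s := Real.sSup_nonneg (by rintro _ ⟨θ, rfl⟩; exact opNormA_nonneg _ _)
  refine ⟨?_, ?_⟩
  · rcases le_or_gt (wA A (T + S)) a with hwa | hwa
    · have : a - b ≤ Real.sqrt ((a - b) ^ 2 + 4 * sSup s) :=
        Real.le_sqrt_of_sq_le (by linarith)
      linarith
    have hw0 : 0 < wA A (T + S) := ha.trans_lt hwa
    refine le_half_add_sqrt (le_of_forall_pos_le_add fun η hη => ?_)
    set w := wA A (T + S) with hwdef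
    set δ := η / w
    have hδ : 0 < δ := div_pos hη hw0
    have hε : 0 < δ ^ 2 / (2 * w) := by positivity
    have hne : {c : ℝ | ∃ x : H, vnormA A x = 1 ∧ c = ‖innA A ((T + S) x) x‖}.Nonempty := by
      by_contra hne
      rw [Set.not_nonempty_iff_eq_empty] at hne
      rw [hwdef, wA, hne, Real.sSup_empty] at hw0
      exact hw0.false
    obtain ⟨_, ⟨x, hx, rfl⟩, hlt⟩ :=
      exists_lt_of_lt_csSup hne (show w - δ ^ 2 / (2 * w) < sSup _ from sub_lt_self _ hε)
    rw [vnormA_eq_norm hB] at hx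
    rw [hB] at hlt
    set z : ℂ := inner ℂ (B ((T + S) x)) (B x) with hz
    have hre : (inner ℂ (B (ReA z.arg (T + S) (Tsharp + Ssharp) x)) (B x) : ℂ).re = ‖z‖ := by
      rw [re_inner_ReA hTSX, ← hz]
      have h : Complex.exp (-(z.arg : ℂ) * Complex.I) * z = (‖z‖ : ℂ) := by
        nth_rewrite 2 [← Complex.norm_mul_exp_arg_mul_I z]
        rw [mul_left_comm, ← Complex.exp_add]
        simp
      rw [h, Complex.ofReal_re]
    have hRx := hR z.arg x
    rw [hx, mul_one] at hRx
    have happ := norm_sub_smul_sq_le hw hx hRx (hre ▸ hlt.le)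
    rw [ReA_add, add_apply, mul_div_cancel₀ _ (by positivity)] at happ
    have hprod := (norm_apply_le_opNormA hB (hPQ z.arg) hx).trans
      (le_csSup ⟨_, hs⟩ ⟨z.arg, rfl⟩)
    have h := sub_mul_sub_le_of_approx_eigenvector ha (hP z.arg) (hQ z.arg) hx hprod hwa
      (le_of_sq_le_sq happ hδ.le)
    rwa [mul_div_cancel₀ _ hw0.ne'] at h
  · have hc : sSup s ≤ a * b := Real.sSup_le hs hab
    have : Real.sqrt ((a - b) ^ 2 + 4 * sSup s) ≤ a + b :=
      Real.sqrt_le_iff.2 ⟨by positivity, by nlinarith⟩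
    linarith
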